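/- arXiv:2411.00271 — 2 statements merged into one kernel-verified Lean document; each statement's English description precedes it below -/
import Mathlib

section
/- Under the standing assumptions with |Cl(R)| ≠ 2 and O transfer Krull: if P₁, P₂ are prime ideals of R coprime to f with ord([P₁]) = 2 and ord([P₂]) = 2k for some k ≥ 2 with k[P₂] = [P₁], then the principal ideal P₁P₂^k is generated by an element of O up to R-units. -/
open scoped nonZeroDivisors

section MonoidDefs
variable {H B : Type*} [CommMonoid H] [CommMonoid B]

/-- The set of lengths of `a`: `{0}` for units, otherwise the set of `k` such that
`a` is a product of `k` atoms (irreducible elements). -/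
def lengthsSet (a : H) : Set ℕ :=
  {k | (IsUnit a ∧ k = 0) ∨
    (¬ IsUnit a ∧ ∃ l : Multiset H, Multiset.card l = k ∧ (∀ x ∈ l, Irreducible x) ∧ l.prod = a)}

/-- A transfer homomorphism: (T1) `B = θ(H)·B^×` and `θ⁻¹(B^×) = H^×`;
(T2) factorizations of `θ u` lift to factorizations of `u` up to associates. -/
def IsTransferHom (θ : H →* B) : Prop :=
  (∀ b : B, ∃ u : H, ∃ ε : Bˣ, b = θ u * ε) ∧
  (∀ u : H, IsUnit (θ u) → IsUnit u) ∧
  (∀ u : H, ∀ b c : B, θ u = b * c →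
    ∃ v w : H, u = v * w ∧ Associated (θ v) b ∧ Associated (θ w) c)

/-- A Krull monoid: a monoid admitting a divisor homomorphism into a
free abelian monoid. -/
def IsKrullMonoid (H : Type*) [CommMonoid H] : Prop :=
  ∃ (ι : Type) (d : H →* Multiplicative (ι →₀ ℕ)), ∀ a b : H, d a ∣ d b → a ∣ b

/-- Half-factorial: all factorizations of an element into atoms have the same length. -/
def IsHalfFactorial (A : Type*) [CommMonoid A] : Prop :=
  ∀ (a : A) (l m : Multiset A), (∀ x ∈ l, Irreducible x) → (∀ x ∈ m, Irreducible x) →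
    l.prod = a → m.prod = a → Multiset.card l = Multiset.card m

/-- An absolutely irreducible element: an atom all of whose powers factor uniquely
into atoms, up to associates. -/
def AbsolutelyIrreducible (a : H) : Prop :=
  Irreducible a ∧ ∀ n : ℕ, 0 < n → ∀ l m : Multiset H,
    (∀ x ∈ l, Irreducible x) → (∀ x ∈ m, Irreducible x) →
    l.prod = a ^ n → m.prod = a ^ n → Multiset.Rel Associated l m

end MonoidDefs

section RingDefs
variable {R : Type*} [CommRing R]

/-- The conductor of a subring `O ⊆ R`: the largest ideal of `R` contained in `O`. -/
def Subring.conductor (O : Subring R) : Ideal R where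
  carrier := {x | ∀ r : R, x * r ∈ O}
  add_mem' := by
    intro a b ha hb r
    have h : (a + b) * r = a * r + b * r := by ring
    rw [h]; exact O.add_mem (ha r) (hb r)
  zero_mem' := by intro r; simpa using O.zero_mem
  smul_mem' := by
    intro c x hx r
    have h : c • x * r = x * (c * r) := by simp [smul_eq_mul]; ring
    rw [h]; exact hx (c * r)

/-- `a` is a regular element modulo the ideal `f`. -/
def RegF (f : Ideal R) (a : R) : Prop := IsUnit (Ideal.Quotient.mk f a)

end RingDefs

section TK
variable {K : Type*} [CommRing K]

/-- `x` and `y` are associated within the submonoid `H` of `K`. -/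
def AssocIn (H : Submonoid K) (x y : K) : Prop :=
  ∃ ε ∈ H, (∃ ε' ∈ H, ε * ε' = 1) ∧ x = y * ε

end TK

variable {R₀ : Type*}

/-- `H` is a Krull overmonoid of `O^∙` inside the quotient field of `O` (which is the
quotient field of `R`), with `O^∙ ⊆ H ⊆ q(O^∙)`, such that the inclusion `O^∙ ↪ H`
is a transfer homomorphism; this witnesses that `O` is transfer Krull. -/
structure IsTKOvermonoid {R : Type*} [CommRing R] [IsDomain R] [IsDedekindDomain R]
    (O : Subring R) (H : Submonoid (FractionRing R)) : Prop where
  nonzero : ∀ x ∈ H, x ≠ 0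
  incl : ∀ a : R, a ∈ O → a ≠ 0 → algebraMap R (FractionRing R) a ∈ H
  inQuot : ∀ x ∈ H, ∃ a b : R, a ∈ O ∧ b ∈ O ∧ a ≠ 0 ∧ b ≠ 0 ∧
    x * algebraMap R (FractionRing R) b = algebraMap R (FractionRing R) a
  krull : IsKrullMonoid ↥H
  t1 : ∀ x ∈ H, ∃ a : R, a ∈ O ∧ a ≠ 0 ∧ ∃ ε ∈ H, (∃ ε' ∈ H, ε * ε' = 1) ∧
    x = algebraMap R (FractionRing R) a * ε
  t1' : ∀ a : R, a ∈ O → a ≠ 0 →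
    (∃ y ∈ H, algebraMap R (FractionRing R) a * y = 1) → ∃ b ∈ O, a * b = 1
  t2 : ∀ a : R, a ∈ O → a ≠ 0 → ∀ x ∈ H, ∀ y ∈ H,
    algebraMap R (FractionRing R) a = x * y →
    ∃ v w : R, v ∈ O ∧ w ∈ O ∧ a = v * w ∧
      AssocIn H (algebraMap R (FractionRing R) v) x ∧
      AssocIn H (algebraMap R (FractionRing R) w) y

/-!
All nonzero elements of `R` lie in `H`: for `0 ≠ c ∈ f` and `0 ≠ x ∈ R` each `c xⁿ` lies in `O`,
and the Krull monoid `H` is completely integrally closed. An element regular modulo `f` has a power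
in `O`, so it is a unit of `H` only if it is a unit of `R`, and if it is associated in `H` to a
product of nonunits, then this product can be lifted to `O` after raising to a power.

Give `P₁` weight `k` and `P₂` weight `1`. A nonunit of `R` generating `P₁^i P₂^j` has weight a
positive multiple of `2k`. Lifting `b^m = b ⋯ b`, where `b` generates `P₁ P₂^k`, gives a `v ∈ O`
associated to `b` in `H` and of weight exactly `2k`, so `v` generates `P₁ P₂^k`, `P₂^(2k)` or `P₁²`.
Take a prime `Q` in the class of `P₂⁻¹`, and generators `c` of `P₂ Q` and `e` of `P₁ Q^k`. In the
last two cases the ideal identities `P₂^(2k) · P₁ Q^k = P₁ P₂^k · (P₂ Q)^k` and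
`P₁ P₂^k · P₁ Q^k = P₁² · (P₂ Q)^k` show that `e` is associated to `c^k` in `H`. But `e` has weight
`2k` with respect to `P₁` and `Q`, so it is not associated to a product of `k ≥ 2` nonunits.
-/

section PrimePowers
variable {M : Type*} [CommMonoidWithZero M] {p q x y : M} {i j : ℕ}

lemma exists_exponents_of_mul_eq_pow_mul_pow [IsCancelMulZero M] [Subsingleton Mˣ]
    [DecompositionMonoid M] (hp : Prime p) (hq : Prime q) (h : x * y = p ^ i * q ^ j) :
    ∃ a b c d : ℕ, x = p ^ a * q ^ b ∧ y = p ^ c * q ^ d ∧ a + c = i ∧ b + d = j := by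
  obtain ⟨x₁, x₂, hx₁, hx₂, rfl⟩ := exists_dvd_and_dvd_of_dvd_mul (Dvd.intro y h)
  obtain ⟨a, hai, hx₁⟩ := (dvd_prime_pow hp i).1 hx₁
  obtain ⟨b, hbj, hx₂⟩ := (dvd_prime_pow hq j).1 hx₂
  obtain rfl := associated_iff_eq.1 hx₁
  obtain rfl := associated_iff_eq.1 hx₂
  obtain ⟨c, rfl⟩ := Nat.exists_eq_add_of_le hai
  obtain ⟨d, rfl⟩ := Nat.exists_eq_add_of_le hbj
  have hpq : p ^ a * q ^ b ≠ 0 := mul_ne_zero (pow_ne_zero _ hp.ne_zero) (pow_ne_zero _ hq.ne_zero)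
  refine ⟨a, b, c, d, rfl, mul_left_cancel₀ hpq ?_, rfl, rfl⟩
  rw [h, pow_add, pow_add, mul_mul_mul_comm]

lemma isUnit_pow_mul_pow_iff (hp : Prime p) (hq : Prime q) :
    IsUnit (p ^ i * q ^ j) ↔ i = 0 ∧ j = 0 := by
  simp only [IsUnit.mul_iff, isUnit_pow_iff_of_not_isUnit hp.not_isUnit,
    isUnit_pow_iff_of_not_isUnit hq.not_isUnit]

end PrimePowers

-- A Krull monoid is completely integrally closed, phrased without its quotient group.
lemma IsKrullMonoid.dvd_of_forall_pow_dvd_mul_pow {M : Type*} [CommMonoid M]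
    (hM : IsKrullMonoid M) {a b c : M} (h : ∀ n : ℕ, b ^ n ∣ c * a ^ n) : b ∣ a := by
  obtain ⟨ι, d, hd⟩ := hM
  have exponent_le : (d b).toAdd ≤ (d a).toAdd := by
    intro s
    by_contra! hlt
    obtain ⟨x, hx⟩ := h ((d c).toAdd s + 1)
    have hs := congrArg (fun z ↦ (d z).toAdd s) hx
    simp only [map_mul, map_pow, toAdd_mul, toAdd_pow, Finsupp.add_apply,
      Finsupp.smul_apply, smul_eq_mul] at hs
    nlinarith
  obtain ⟨y, hy⟩ := exists_add_of_le exponent_le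
  exact hd b a ⟨Multiplicative.ofAdd y, Multiplicative.toAdd.injective hy⟩

namespace AssocIn
variable {K : Type*} [CommRing K] {H : Submonoid K} {x y z x' y' : K}

lemma refl (x : K) : AssocIn H x x := ⟨1, H.one_mem, ⟨1, H.one_mem, mul_one 1⟩, (mul_one x).symm⟩

lemma symm (h : AssocIn H x y) : AssocIn H y x := by
  obtain ⟨ε, hε, ⟨ε', hε', hεε'⟩, rfl⟩ := h
  exact ⟨ε', hε', ⟨ε, hε, by rw [mul_comm, hεε']⟩, by rw [mul_assoc, hεε', mul_one]⟩

lemma mul (h : AssocIn H x y) (h' : AssocIn H x' y') : AssocIn H (x * x') (y * y') := by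
  obtain ⟨ε, hε, ⟨ε', hε', hεε'⟩, rfl⟩ := h
  obtain ⟨δ, hδ, ⟨δ', hδ', hδδ'⟩, rfl⟩ := h'
  exact ⟨ε * δ, H.mul_mem hε hδ, ⟨ε' * δ', H.mul_mem hε' hδ',
    by rw [mul_mul_mul_comm, hεε', hδδ', mul_one]⟩, mul_mul_mul_comm ..⟩

lemma trans (h : AssocIn H x y) (h' : AssocIn H y z) : AssocIn H x z := by
  obtain ⟨ε, hε, ⟨ε', hε', hεε'⟩, rfl⟩ := h
  obtain ⟨δ, hδ, ⟨δ', hδ', hδδ'⟩, rfl⟩ := h'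
  exact ⟨δ * ε, H.mul_mem hδ hε, ⟨δ' * ε', H.mul_mem hδ' hε',
    by rw [mul_mul_mul_comm, hεε', hδδ', mul_one]⟩, mul_assoc ..⟩

lemma pow (h : AssocIn H x y) (n : ℕ) : AssocIn H (x ^ n) (y ^ n) := by
  induction n with
  | zero => simpa only [pow_zero] using refl 1
  | succ n ih => simpa only [pow_succ] using ih.mul h

lemma mem (h : AssocIn H x y) (hy : y ∈ H) : x ∈ H := by
  obtain ⟨ε, hε, -, rfl⟩ := h
  exact H.mul_mem hy hε

lemma of_mul_left [IsDomain K] (h : AssocIn H (x * y) (x' * y')) (hx : AssocIn H x x')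
    (hx₀ : x ≠ 0) : AssocIn H y y' := by
  have hxy : AssocIn H (x * y) (x * y') := h.trans (hx.symm.mul (refl y'))
  obtain ⟨ε, hε, hunit, heq⟩ := hxy
  exact ⟨ε, hε, hunit, mul_left_cancel₀ hx₀ (heq.trans (mul_assoc ..))⟩

end AssocIn

section Conductor
variable {R : Type*} [CommRing R]

lemma regF_of_isCoprime {f : Ideal R} {a : R} (h : IsCoprime (Ideal.span {a}) f) : RegF f a := by
  obtain ⟨_, hx, y, hy, hxy⟩ := Ideal.isCoprime_iff_exists.1 h
  obtain ⟨r, rfl⟩ := Ideal.mem_span_singleton.1 hx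
  refine IsUnit.of_mul_eq_one (Ideal.Quotient.mk f r) ?_
  rw [← map_mul, ← map_one (Ideal.Quotient.mk f), ← hxy, map_add,
    Ideal.Quotient.eq_zero_iff_mem.2 hy, add_zero]

lemma mem_of_mem_conductor {O : Subring R} {x : R} (hx : x ∈ O.conductor) : x ∈ O :=
  mul_one x ▸ hx 1

lemma RegF.exists_pow_mem {O : Subring R} (htor : IsMulTorsion (R ⧸ O.conductor)ˣ) {a : R}
    (ha : RegF O.conductor a) : ∃ m : ℕ, 0 < m ∧ a ^ m ∈ O := by
  obtain ⟨u, hu⟩ := ha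
  obtain ⟨m, hm, hum⟩ := (htor u).exists_pow_eq_one
  have hsub : a ^ m - 1 ∈ O.conductor := by
    rw [← Ideal.Quotient.eq_zero_iff_mem, map_sub, map_pow, ← hu, ← Units.val_pow_eq_pow_val, hum,
      Units.val_one, map_one, sub_self]
  exact ⟨m, hm, sub_add_cancel (a ^ m) 1 ▸ O.add_mem (mem_of_mem_conductor hsub) O.one_mem⟩

end Conductor

section DedekindDomain
variable {R : Type*} [CommRing R] [IsDedekindDomain R]

lemma span_singleton_pow_eq {S : Type*} [CommSemiring S] {I J : Ideal S} {x : S} {i j : ℕ}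
    (h : Ideal.span {x} = I ^ i * J ^ j) (m : ℕ) :
    Ideal.span {x ^ m} = I ^ (i * m) * J ^ (j * m) := by
  rw [← Ideal.span_singleton_pow, h, mul_pow, ← pow_mul, ← pow_mul]

lemma not_isUnit_of_span_singleton_eq_mul {S : Type*} [CommRing S] {I J : Ideal S}
    (hI : I ≠ ⊤) {x : S} (h : Ideal.span {x} = I * J) : ¬ IsUnit x := by
  rw [← Ideal.span_singleton_eq_top, h]
  exact fun hIJ ↦ hI (top_le_iff.1 (hIJ ▸ Ideal.mul_le_left))

lemma prime_coe_of_isPrime_coe {P : (Ideal R)⁰} (hP : (P : Ideal R).IsPrime) :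
    Prime (P : Ideal R) :=
  Ideal.prime_of_isPrime (nonZeroDivisors.coe_ne_zero P) hP

lemma isCoprime_of_not_le {P : (Ideal R)⁰} (hP : (P : Ideal R).IsPrime) {I : Ideal R}
    (h : ¬ I ≤ P) : IsCoprime (P : Ideal R) I := by
  have hmax : (P : Ideal R).IsMaximal := hP.isMaximal (nonZeroDivisors.coe_ne_zero P)
  exact Ideal.isCoprime_iff_sup_eq.2 (hmax.out.2 _ (left_lt_sup.2 h))

lemma exists_regular_generator {I : (Ideal R)⁰} {f : Ideal R} (hI : ClassGroup.mk0 I = 1)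
    (hf : IsCoprime (I : Ideal R) f) :
    ∃ a : R, a ≠ 0 ∧ RegF f a ∧ Ideal.span {a} = (I : Ideal R) := by
  obtain ⟨⟨a, ha⟩⟩ := (ClassGroup.mk0_eq_one_iff I.2).1 hI
  replace ha : Ideal.span {a} = (I : Ideal R) := ha.symm
  refine ⟨a, ?_, regF_of_isCoprime (ha ▸ hf), ha⟩
  rintro rfl
  exact nonZeroDivisors.coe_ne_zero I (ha ▸ Ideal.span_singleton_eq_bot.2 rfl)

variable {P Q : (Ideal R)⁰} {k i j : ℕ}

lemma mk0_pow_mul_pow_eq_one_iff (hPQ : ClassGroup.mk0 P ^ k = ClassGroup.mk0 Q) :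
    ClassGroup.mk0 (Q ^ i * P ^ j) = 1 ↔ orderOf (ClassGroup.mk0 P) ∣ k * i + j := by
  rw [orderOf_dvd_iff_pow_eq_one, pow_add, pow_mul, hPQ, map_mul, map_pow, map_pow]

lemma orderOf_le_of_span_singleton_eq (hPQ : ClassGroup.mk0 P ^ k = ClassGroup.mk0 Q)
    (hP : (P : Ideal R).IsPrime) (hQ : (Q : Ideal R).IsPrime) (hk : k ≠ 0) {v : R}
    (hv : ¬ IsUnit v) (h : Ideal.span {v} = (Q ^ i * P ^ j : Ideal R)) :
    orderOf (ClassGroup.mk0 P) ≤ k * i + j := by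
  refine Nat.le_of_dvd (Nat.pos_of_ne_zero fun hzero ↦ hv ?_)
    ((mk0_pow_mul_pow_eq_one_iff hPQ).1 ((ClassGroup.mk0_eq_one_iff _).2 ⟨v, h.symm⟩))
  have hij : i = 0 ∧ j = 0 := by simpa [hk] using hzero
  rw [← Ideal.span_singleton_eq_top, ← Ideal.isUnit_iff, h]
  exact (isUnit_pow_mul_pow_iff (prime_coe_of_isPrime_coe hQ)
    (prime_coe_of_isPrime_coe hP)).2 hij

lemma exists_exponents_of_span_singleton_mul_eq (hP : (P : Ideal R).IsPrime)
    (hQ : (Q : Ideal R).IsPrime) {v w : R}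
    (h : Ideal.span {v * w} = (Q ^ i * P ^ j : Ideal R)) :
    ∃ a b c d : ℕ, Ideal.span {v} = (Q ^ a * P ^ b : Ideal R) ∧
      Ideal.span {w} = (Q ^ c * P ^ d : Ideal R) ∧ a + c = i ∧ b + d = j := by
  rw [← Ideal.span_singleton_mul_span_singleton] at h
  exact exists_exponents_of_mul_eq_pow_mul_pow (prime_coe_of_isPrime_coe hQ)
    (prime_coe_of_isPrime_coe hP) h

lemma card_mul_orderOf_le (hPQ : ClassGroup.mk0 P ^ k = ClassGroup.mk0 Q)
    (hP : (P : Ideal R).IsPrime) (hQ : (Q : Ideal R).IsPrime) (hk : k ≠ 0) {x : R}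
    (hx : Ideal.span {x} = (Q ^ i * P ^ j : Ideal R)) {s : Multiset R}
    (hs : ∀ v ∈ s, ¬ IsUnit v) (hsx : s.prod ∣ x) :
    Multiset.card s * orderOf (ClassGroup.mk0 P) ≤ k * i + j := by
  induction s using Multiset.induction_on generalizing x i j with
  | empty => simp
  | cons v s ih =>
    obtain ⟨w, rfl⟩ := hsx
    rw [Multiset.prod_cons, mul_assoc] at hx
    obtain ⟨a, b, c, d, hv, hsw, rfl, rfl⟩ := exists_exponents_of_span_singleton_mul_eq hP hQ hx
    have head := orderOf_le_of_span_singleton_eq hPQ hP hQ hk (hs v (s.mem_cons_self v)) hv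
    have tail := ih hsw (fun u hu ↦ hs u (Multiset.mem_cons_of_mem hu)) (dvd_mul_right ..)
    rw [Multiset.card_cons]
    linarith

lemma exists_exponents_of_le_card_mul_orderOf (hPQ : ClassGroup.mk0 P ^ k = ClassGroup.mk0 Q)
    (hP : (P : Ideal R).IsPrime) (hQ : (Q : Ideal R).IsPrime) (hk : k ≠ 0) {x : R}
    (hx : Ideal.span {x} = (Q ^ i * P ^ j : Ideal R)) {s : Multiset R}
    (hs : ∀ v ∈ s, ¬ IsUnit v) (hsx : s.prod ∣ x)
    (hle : k * i + j ≤ Multiset.card s * orderOf (ClassGroup.mk0 P)) {v : R} (hv : v ∈ s) :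
    ∃ a b : ℕ, Ideal.span {v} = (Q ^ a * P ^ b : Ideal R) ∧
      k * a + b = orderOf (ClassGroup.mk0 P) := by
  obtain ⟨s, rfl⟩ := Multiset.exists_cons_of_mem hv
  obtain ⟨w, rfl⟩ := hsx
  rw [Multiset.prod_cons, mul_assoc] at hx
  obtain ⟨a, b, c, d, hvspan, hsw, rfl, rfl⟩ :=
    exists_exponents_of_span_singleton_mul_eq hP hQ hx
  have head := orderOf_le_of_span_singleton_eq hPQ hP hQ hk (hs v hv) hvspan
  have tail := card_mul_orderOf_le hPQ hP hQ hk hsw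
    (fun u hu ↦ hs u (Multiset.mem_cons_of_mem hu)) (dvd_mul_right ..)
  rw [Multiset.card_cons] at hle
  exact ⟨a, b, hvspan, by linarith⟩

end DedekindDomain

namespace IsTKOvermonoid
variable {R : Type*} [CommRing R] [IsDedekindDomain R] {O : Subring R}
  {H : Submonoid (FractionRing R)}

lemma algebraMap_mem (hH : IsTKOvermonoid O H) (hf : O.conductor ≠ ⊥) {x : R} (hx : x ≠ 0) :
    algebraMap R (FractionRing R) x ∈ H := by
  obtain ⟨c, hc, hc₀⟩ := Submodule.exists_mem_ne_zero_of_ne_bot hf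
  let inclH (y : R) (hy : y ∈ O.conductor) (hy₀ : y ≠ 0) : H :=
    ⟨algebraMap R _ y, hH.incl y (mem_of_mem_conductor hy) hy₀⟩
  let C : H := inclH c hc hc₀
  let CX : H := inclH (c * x) (O.conductor.mul_mem_right x hc) (mul_ne_zero hc₀ hx)
  have hdvd (n : ℕ) : C ^ n ∣ C * CX ^ n := by
    refine ⟨inclH (c * x ^ n) (O.conductor.mul_mem_right _ hc)
      (mul_ne_zero hc₀ (pow_ne_zero n hx)), Subtype.ext ?_⟩
    simp only [C, CX, inclH, Submonoid.coe_mul, SubmonoidClass.coe_pow, ← map_mul, ← map_pow]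
    ring_nf
  obtain ⟨Y, hY⟩ := hH.krull.dvd_of_forall_pow_dvd_mul_pow hdvd
  have hY' : algebraMap R _ c * algebraMap R _ x = algebraMap R (FractionRing R) c * Y :=
    (map_mul ..).symm.trans (congrArg Subtype.val hY)
  rw [mul_left_cancel₀ (hH.nonzero _ C.2) hY']
  exact Y.2

lemma assocIn_algebraMap (hH : IsTKOvermonoid O H) (hf : O.conductor ≠ ⊥) {x y : R}
    (h : Associated x y) : AssocIn H (algebraMap R _ x) (algebraMap R _ y) := by
  obtain ⟨u, rfl⟩ := h.symm
  refine ⟨algebraMap R _ u, hH.algebraMap_mem hf u.ne_zero, ⟨algebraMap R _ ↑u⁻¹,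
    hH.algebraMap_mem hf u⁻¹.ne_zero, ?_⟩, map_mul ..⟩
  rw [← map_mul, u.mul_inv, map_one]

lemma isUnit_of_assocIn_one (hH : IsTKOvermonoid O H)
    (htor : IsMulTorsion (R ⧸ O.conductor)ˣ) {a : R} (ha : RegF O.conductor a)
    (h : AssocIn H (algebraMap R _ a) 1) : IsUnit a := by
  obtain ⟨m, hm, ham⟩ := ha.exists_pow_mem htor
  have ha₀ : a ≠ 0 := by
    rintro rfl
    exact hH.nonzero _ (h.mem H.one_mem) (map_zero _)
  obtain ⟨ε, hε, -, heq⟩ := (h.pow m).symm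
  obtain ⟨b, -, hb⟩ := hH.t1' (a ^ m) ham (pow_ne_zero m ha₀)
    ⟨ε, hε, by rw [map_pow, ← heq, one_pow]⟩
  exact (isUnit_pow_iff hm.ne').1 (IsUnit.of_mul_eq_one b hb)

lemma exists_multiset_lift (hH : IsTKOvermonoid O H) {t : Multiset (FractionRing R)}
    (ht : ∀ y ∈ t, y ∈ H) {a : R} (ha : a ∈ O) (ha₀ : a ≠ 0)
    (h : AssocIn H (algebraMap R _ a) t.prod) :
    ∃ s : Multiset R, (∀ v ∈ s, v ∈ O) ∧ s.prod ∣ a ∧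
      Multiset.Rel (AssocIn H) (s.map (algebraMap R _)) t := by
  induction t using Multiset.induction_on generalizing a with
  | empty => exact ⟨0, by simp, by simp, by simp⟩
  | cons y t ih =>
    have htH : ∀ z ∈ t, z ∈ H := fun z hz ↦ ht z (Multiset.mem_cons_of_mem hz)
    obtain ⟨ε, hε, hunit, heq⟩ := h
    rw [Multiset.prod_cons, mul_assoc] at heq
    obtain ⟨v, w, hv, hw, rfl, hvy, hwt⟩ := hH.t2 a ha ha₀ y (ht y (t.mem_cons_self y))
      (t.prod * ε) (H.mul_mem (H.multiset_prod_mem t htH) hε) heq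
    obtain ⟨s, hsO, hsw, hst⟩ := ih htH hw (right_ne_zero_of_mul ha₀)
      (hwt.trans ⟨ε, hε, hunit, rfl⟩)
    refine ⟨v ::ₘ s, Multiset.forall_mem_cons.2 ⟨hv, hsO⟩, ?_, ?_⟩
    · rw [Multiset.prod_cons]
      exact mul_dvd_mul_left v hsw
    · rw [Multiset.map_cons]
      exact Multiset.Rel.cons hvy hst

lemma exists_multiset_prod_dvd_pow (hH : IsTKOvermonoid O H) (hf : O.conductor ≠ ⊥)
    (htor : IsMulTorsion (R ⧸ O.conductor)ˣ) {x y : R} (hx₀ : x ≠ 0) (hx : RegF O.conductor x)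
    (hy₀ : y ≠ 0) (hy : RegF O.conductor y) (hyu : ¬ IsUnit y) {n : ℕ}
    (h : AssocIn H (algebraMap R _ x) (algebraMap R _ y ^ n)) :
    ∃ m : ℕ, 0 < m ∧ ∃ s : Multiset R, Multiset.card s = n * m ∧ s.prod ∣ x ^ m ∧
      ∀ v ∈ s, v ∈ O ∧ ¬ IsUnit v ∧ AssocIn H (algebraMap R _ v) (algebraMap R _ y) := by
  obtain ⟨m, hm, hxm⟩ := hx.exists_pow_mem htor
  obtain ⟨s, hsO, hsx, hrel⟩ := hH.exists_multiset_lift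
    (t := Multiset.replicate (n * m) (algebraMap R _ y))
    (fun z hz ↦ Multiset.eq_of_mem_replicate hz ▸ hH.algebraMap_mem hf hy₀) hxm
    (pow_ne_zero m hx₀) (by simpa only [Multiset.prod_replicate, map_pow, pow_mul] using h.pow m)
  obtain ⟨hcard, hassoc⟩ := Multiset.rel_replicate_right.1 hrel
  refine ⟨m, hm, s, by rwa [Multiset.card_map] at hcard, hsx, fun v hv ↦ ?_⟩
  have hvy := hassoc _ (Multiset.mem_map_of_mem _ hv)
  refine ⟨hsO v hv, fun hvu ↦ hyu (hH.isUnit_of_assocIn_one htor hy ?_), hvy⟩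
  simpa only [map_one] using
    hvy.symm.trans (hH.assocIn_algebraMap hf (associated_one_iff_isUnit.2 hvu))

variable {P Q : (Ideal R)⁰} {k i j : ℕ}

lemma mul_orderOf_le_of_assocIn_pow (hH : IsTKOvermonoid O H) (hf : O.conductor ≠ ⊥)
    (htor : IsMulTorsion (R ⧸ O.conductor)ˣ)
    (hPQ : ClassGroup.mk0 P ^ k = ClassGroup.mk0 Q) (hP : (P : Ideal R).IsPrime)
    (hQ : (Q : Ideal R).IsPrime) (hk : k ≠ 0) {x y : R} (hx₀ : x ≠ 0)
    (hx : RegF O.conductor x) (hxspan : Ideal.span {x} = (Q ^ i * P ^ j : Ideal R))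
    (hy₀ : y ≠ 0) (hy : RegF O.conductor y) (hyu : ¬ IsUnit y) {n : ℕ}
    (h : AssocIn H (algebraMap R _ x) (algebraMap R _ y ^ n)) :
    n * orderOf (ClassGroup.mk0 P) ≤ k * i + j := by
  obtain ⟨m, hm, s, hcard, hdvd, hs⟩ :=
    hH.exists_multiset_prod_dvd_pow hf htor hx₀ hx hy₀ hy hyu h
  have hbound := card_mul_orderOf_le hPQ hP hQ hk (span_singleton_pow_eq hxspan m)
    (fun v hv ↦ (hs v hv).2.1) hdvd
  rw [hcard] at hbound
  exact Nat.le_of_mul_le_mul_right (by linarith) hm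

lemma exists_mem_assocIn_of_span_singleton_eq (hH : IsTKOvermonoid O H) (hf : O.conductor ≠ ⊥)
    (htor : IsMulTorsion (R ⧸ O.conductor)ˣ)
    (hPQ : ClassGroup.mk0 P ^ k = ClassGroup.mk0 Q) (hP : (P : Ideal R).IsPrime)
    (hQ : (Q : Ideal R).IsPrime) (hk : k ≠ 0) {x : R} (hx₀ : x ≠ 0)
    (hx : RegF O.conductor x) (hxu : ¬ IsUnit x)
    (hxspan : Ideal.span {x} = (Q ^ i * P ^ j : Ideal R))
    (hij : k * i + j = orderOf (ClassGroup.mk0 P)) :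
    ∃ v ∈ O, AssocIn H (algebraMap R _ v) (algebraMap R _ x) ∧
      ∃ a b : ℕ, Ideal.span {v} = (Q ^ a * P ^ b : Ideal R) ∧
        k * a + b = orderOf (ClassGroup.mk0 P) := by
  obtain ⟨m, hm, s, hcard, hdvd, hs⟩ :=
    hH.exists_multiset_prod_dvd_pow hf htor hx₀ hx hx₀ hx hxu (n := 1)
      (by simpa only [pow_one] using AssocIn.refl _)
  rw [one_mul] at hcard
  obtain ⟨v, hv⟩ := Multiset.card_pos_iff_exists_mem.1 (hcard ▸ hm)
  have hle : k * (i * m) + j * m ≤ Multiset.card s * orderOf (ClassGroup.mk0 P) := by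
    rw [hcard, ← hij]
    linarith
  exact ⟨v, (hs v hv).1, (hs v hv).2.2, exists_exponents_of_le_card_mul_orderOf hPQ hP hQ hk
    (span_singleton_pow_eq hxspan m) (fun u hu ↦ (hs u hu).2.1) hdvd hle hv⟩

lemma assocIn_of_span_singleton_mul_eq (hH : IsTKOvermonoid O H) (hf : O.conductor ≠ ⊥)
    {x x' y y' : R} (hx₀ : x ≠ 0) (hx : AssocIn H (algebraMap R _ x) (algebraMap R _ x'))
    (h : Ideal.span {x} * Ideal.span {y} = Ideal.span {x'} * Ideal.span {y'}) :
    AssocIn H (algebraMap R _ y) (algebraMap R _ y') := by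
  rw [Ideal.span_singleton_mul_span_singleton, Ideal.span_singleton_mul_span_singleton,
    Ideal.span_singleton_eq_span_singleton] at h
  refine AssocIn.of_mul_left ?_ hx ((map_ne_zero_iff _ (IsFractionRing.injective R _)).2 hx₀)
  simpa only [map_mul] using hH.assocIn_algebraMap hf h

lemma exponents_eq_of_not_assocIn_pow (hH : IsTKOvermonoid O H) (hf : O.conductor ≠ ⊥)
    {I J L : Ideal R} {b c e v : R} (hb₀ : b ≠ 0) (hb : Ideal.span {b} = I * J ^ k)
    (hc : Ideal.span {c} = J * L) (he : Ideal.span {e} = I * L ^ k)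
    (hv : Ideal.span {v} = I ^ i * J ^ j) (hk : k ≠ 0) (hij : k * i + j = 2 * k)
    (hvb : AssocIn H (algebraMap R _ v) (algebraMap R _ b))
    (hec : ¬ AssocIn H (algebraMap R _ e) (algebraMap R _ c ^ k)) : i = 1 ∧ j = k := by
  rw [← map_pow] at hec
  have hi : i ≤ 2 := Nat.le_of_mul_le_mul_left (by linarith) (Nat.pos_of_ne_zero hk)
  interval_cases i
  · obtain rfl : j = 2 * k := by lia
    refine absurd (hH.assocIn_of_span_singleton_mul_eq hf hb₀ hvb.symm ?_).symm hec
    rw [← Ideal.span_singleton_pow, hb, hc, hv, he]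
    ring
  · exact ⟨rfl, by lia⟩
  · obtain rfl : j = 0 := by lia
    refine absurd (hH.assocIn_of_span_singleton_mul_eq hf hb₀ hvb.symm ?_) hec
    rw [← Ideal.span_singleton_pow, hb, hc, hv, he]
    ring

end IsTKOvermonoid

theorem mixed_order_classes_product_in_order_general
    {R : Type*} [CommRing R] [IsDedekindDomain R] (O : Subring R)
    (htor : IsMulTorsion (R ⧸ O.conductor)ˣ)
    (H : Submonoid (FractionRing R)) (hH : IsTKOvermonoid O H) (P₁ P₂ Q : (Ideal R)⁰)
    (hp₁ : (P₁ : Ideal R).IsPrime) (hp₂ : (P₂ : Ideal R).IsPrime) (hq : (Q : Ideal R).IsPrime)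
    (hc₁ : ¬ O.conductor ≤ P₁) (hc₂ : ¬ O.conductor ≤ P₂) (hcQ : ¬ O.conductor ≤ Q)
    (k : ℕ) (hk : 2 ≤ k) (ho₂ : orderOf (ClassGroup.mk0 P₂) = 2 * k)
    (hcl : ClassGroup.mk0 P₂ ^ k = ClassGroup.mk0 P₁)
    (hQ : ClassGroup.mk0 Q = (ClassGroup.mk0 P₂)⁻¹) :
    ∃ b ∈ O, Ideal.span {b} = (P₁ * P₂ ^ k : Ideal R) := by
  have hf : O.conductor ≠ ⊥ := fun h ↦ hc₁ (h ▸ bot_le)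
  have hk₀ : k ≠ 0 := by lia
  have hoQ : orderOf (ClassGroup.mk0 Q) = 2 * k := by rw [hQ, orderOf_inv, ho₂]
  have hclQ : ClassGroup.mk0 Q ^ k = ClassGroup.mk0 P₁ := by
    rw [hQ, inv_pow, ← hcl, inv_eq_iff_mul_eq_one, ← pow_add, ← two_mul, ← ho₂, pow_orderOf_eq_one]
  have cop₁ := isCoprime_of_not_le hp₁ hc₁
  have cop₂ := isCoprime_of_not_le hp₂ hc₂
  have copQ := isCoprime_of_not_le hq hcQ
  obtain ⟨b, hb₀, hbf, hb⟩ := exists_regular_generator (I := P₁ ^ 1 * P₂ ^ k)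
    ((mk0_pow_mul_pow_eq_one_iff hcl).2 (by rw [ho₂, mul_one, two_mul]))
    (cop₁.pow_left.mul_left cop₂.pow_left)
  obtain ⟨e, he₀, hef, he⟩ := exists_regular_generator (I := P₁ ^ 1 * Q ^ k)
    ((mk0_pow_mul_pow_eq_one_iff hclQ).2 (by rw [hoQ, mul_one, two_mul]))
    (cop₁.pow_left.mul_left copQ.pow_left)
  obtain ⟨c, hc₀, hcf, hc⟩ := exists_regular_generator (I := P₂ * Q)
    (by rw [map_mul, hQ, mul_inv_cancel]) (cop₂.mul_left copQ)
  simp only [Submonoid.coe_mul, SubmonoidClass.coe_pow] at hb he hc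
  have hec : ¬ AssocIn H (algebraMap R _ e) (algebraMap R _ c ^ k) := fun h ↦ by
    have hbound := hH.mul_orderOf_le_of_assocIn_pow hf htor hclQ hq hp₁ hk₀ he₀ hef he hc₀ hcf
      (not_isUnit_of_span_singleton_eq_mul hp₂.ne_top hc) h
    rw [hoQ] at hbound
    nlinarith
  obtain ⟨v, hvO, hvb, i, j, hv, hij⟩ := hH.exists_mem_assocIn_of_span_singleton_eq hf htor hcl
    hp₂ hp₁ hk₀ hb₀ hbf
    (not_isUnit_of_span_singleton_eq_mul hp₁.ne_top (pow_one (P₁ : Ideal R) ▸ hb)) hb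
    (by rw [ho₂, mul_one, two_mul])
  obtain ⟨rfl, rfl⟩ := hH.exponents_eq_of_not_assocIn_pow hf hb₀ (pow_one (P₁ : Ideal R) ▸ hb) hc
    (pow_one (P₁ : Ideal R) ▸ he) hv hk₀ (ho₂ ▸ hij) hvb hec
  exact ⟨v, hvO, by rw [hv, pow_one]⟩

theorem mixed_order_classes_product_in_order
    {R : Type*} [CommRing R] [IsDomain R] [IsDedekindDomain R]
    (O : Subring R) (hne : O ≠ ⊤) (hfg : Module.Finite ↥O R)
    (hfrac : ∀ r : R, ∃ a b : ↥O, (b : R) ≠ 0 ∧ (b : R) * r = (a : R))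
    (htor : ∀ c : ClassGroup R, ∃ n : ℕ, 0 < n ∧ c ^ n = 1)
    (hfin : Finite (R ⧸ O.conductor))
    (hcls : ∀ c : ClassGroup R, ∃ (P : Ideal R) (hP : P ∈ (Ideal R)⁰),
      P.IsPrime ∧ ¬ O.conductor ≤ P ∧ ClassGroup.mk0 ⟨P, hP⟩ = c)
    (H : Submonoid (FractionRing R)) (hH : IsTKOvermonoid O H)
    (hcard : Nat.card (ClassGroup R) ≠ 2)
    (P₁ P₂ : Ideal R) (h₁ : P₁ ∈ (Ideal R)⁰) (h₂ : P₂ ∈ (Ideal R)⁰)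
    (hp₁ : P₁.IsPrime) (hp₂ : P₂.IsPrime)
    (hc₁ : ¬ O.conductor ≤ P₁) (hc₂ : ¬ O.conductor ≤ P₂)
    (k : ℕ) (hk : 2 ≤ k)
    (ho₁ : orderOf (ClassGroup.mk0 ⟨P₁, h₁⟩) = 2)
    (ho₂ : orderOf (ClassGroup.mk0 ⟨P₂, h₂⟩) = 2 * k)
    (hcl : (ClassGroup.mk0 ⟨P₂, h₂⟩) ^ k = ClassGroup.mk0 ⟨P₁, h₁⟩) :
    ∃ b ∈ O, Ideal.span {b} = P₁ * P₂ ^ k := by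
  obtain ⟨Q, hQ, hq, hcQ, hQc⟩ := hcls (ClassGroup.mk0 ⟨P₂, h₂⟩)⁻¹
  exact mixed_order_classes_product_in_order_general O isMulTorsion_of_finite H hH
    ⟨P₁, h₁⟩ ⟨P₂, h₂⟩ ⟨Q, hQ⟩ hp₁ hp₂ hq hc₁ hc₂ hcQ k hk ho₂ hcl hQc
end

section
/- Let R be a Dedekind domain with torsion class group, |Cl(R)| ≠ 2, and O ⊆ R an order with conductor f, R/f finite, every class of Cl(R) containing a prime coprime to f. If O·R^× = R and v_p(u) = 1 for all atoms u of O_p and all p ∈ Spec(O), then the inclusion O^• ↪ R^• is a transfer homomorphism; in particular O is transfer Krull and there is a transfer homomorphism O^• → B(Cl(R)). -/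
open scoped nonZeroDivisors

open Classical in
/-- The `P`-adic valuation of `a`: the multiplicity of the prime ideal `P` in the
factorization of the ideal `aR`. -/
noncomputable def idealVal {R : Type*} [CommRing R] [IsDomain R] [IsDedekindDomain R]
    (P : Ideal R) (a : R) : ℕ :=
  Multiset.count P (UniqueFactorizationMonoid.normalizedFactors (Ideal.span {a}))

/-- `a ∈ O` maps to an atom of the localization of `O` at the prime `P ∩ O`. -/
def IsLocalAtom {R : Type*} [CommRing R] (O : Subring R) (P : Ideal R)
    (hq : (Ideal.comap (Subring.subtype O) P).IsPrime) (a : ↥O) : Prop :=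
  Irreducible (algebraMap ↥O
    (@Localization.AtPrime ↥O _ (Ideal.comap (Subring.subtype O) P) hq) a)

/-- The inclusion `O^∙ ↪ R^∙` is a transfer homomorphism. -/
def InclusionIsTransferHom {R : Type*} [CommRing R] (O : Subring R) : Prop :=
  (∀ r : R, r ≠ 0 → ∃ (a : ↥O) (ε : Rˣ), r = (a : R) * (ε : R)) ∧
  (∀ a : ↥O, IsUnit ((a : R)) → IsUnit a) ∧
  (∀ a : ↥O, ∀ b c : R, (a : R) = b * c →
    ∃ v w : ↥O, a = v * w ∧ Associated ((v : R)) b ∧ Associated ((w : R)) c)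

/-- The monoid of zero-sum sequences over `G`, as a submonoid of the free abelian
monoid of multisets over `G`. -/
def BlockMonoid (G : Type*) [CommGroup G] : Submonoid (Multiplicative (Multiset G)) where
  carrier := {x | (Multiplicative.toAdd x).prod = 1}
  one_mem' := by simp
  mul_mem' := by
    intro a b ha hb
    simp only [Set.mem_setOf_eq, toAdd_mul, Multiset.prod_add] at *
    rw [ha, hb, one_mul]

open UniqueFactorizationMonoid IsDedekindDomain

/-!
An element of `R` lies in `O` as soon as it lies in the localization `O_p` for every prime `p`
containing the conductor `f`. Since the atoms of `O_p` have valuation one, a factorization of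
`a ∈ O` into such atoms yields, for every value up to `v_p(a)`, a divisor of `a` in `O_p` of that
valuation. Hence, if `a = b * c` in `R`, some unit of `R_p` scales `b` and its inverse scales `c`
into `O_p`. The Chinese remainder theorem glues these units into `r, r' ∈ R` that are inverse to
each other modulo `f`, with `r * b, r' * c ∈ O`, and `O · Rˣ = R` replaces `r` by a unit of `R`.
This is the transfer property of `O^∙ ↪ R^∙`; composing with `R^∙ → B(Cl(R))`, which records the
classes of the prime divisors of an element, gives the transfer homomorphism on `O^∙`.
-/

theorem exists_mul_eq_mul_of_not_irreducible_algebraMap {A : Type*} [CommRing A] (p : Ideal A)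
    [p.IsPrime] {a : A} (ha : a ∈ p)
    (h : ¬ Irreducible (algebraMap A (Localization.AtPrime p) a)) :
    ∃ b ∈ p, ∃ c ∈ p, ∃ s ∉ p, b * c = s * a := by
  have not_isUnit : ¬ IsUnit (algebraMap A (Localization.AtPrime p) a) := by
    rw [IsLocalization.AtPrime.isUnit_to_map_iff _ p]
    exact fun h' => h' ha
  simp only [irreducible_iff, not_isUnit, not_false_eq_true, true_and, not_forall, not_or] at h
  obtain ⟨x, y, hxy, hx, hy⟩ := h
  obtain ⟨b, s, rfl⟩ := IsLocalization.exists_mk'_eq p.primeCompl x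
  obtain ⟨c, t, rfl⟩ := IsLocalization.exists_mk'_eq p.primeCompl y
  rw [IsLocalization.AtPrime.isUnit_mk'_iff _ p, Ideal.mem_primeCompl_iff, not_not] at hx hy
  rw [← IsLocalization.mk'_mul, eq_comm, IsLocalization.mk'_eq_iff_eq_mul, ← map_mul,
    IsLocalization.eq_iff_exists p.primeCompl] at hxy
  obtain ⟨u, hu⟩ := hxy
  refine ⟨u * b, p.mul_mem_left _ hx, c, hy, _, (u * (s * t)).2, ?_⟩
  simp only [Submonoid.coe_mul] at hu ⊢
  linear_combination hu

section LocalSubring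

variable {R : Type*} [CommRing R] (O : Subring R)

/-- The ideal of denominators `(O : x) = {s ∈ O | s x ∈ O}` of an element `x ∈ R`. -/
def denominatorIdeal (x : R) : Ideal O :=
  (LinearMap.range (Algebra.linearMap O R)).comap (LinearMap.toSpanSingleton O R x)

/-- The elements of `R` that lie in the localization of `O` at `P ∩ O`, that is, those with a
denominator in `O \ P`. Working with `O_{P ∩ O} ∩ R` keeps all computations inside `R`. -/
def localSubring (P : Ideal R) [P.IsPrime] : Subring R where
  carrier := {x | ∃ s : O, (s : R) ∉ P ∧ (s : R) * x ∈ O}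
  mul_mem' := by
    rintro x y ⟨s, hs, hsx⟩ ⟨t, ht, hty⟩
    refine ⟨s * t, Ideal.IsPrime.mul_notMem ‹_› hs ht, ?_⟩
    convert O.mul_mem hsx hty using 1
    push_cast
    ring
  add_mem' := by
    rintro x y ⟨s, hs, hsx⟩ ⟨t, ht, hty⟩
    refine ⟨s * t, Ideal.IsPrime.mul_notMem ‹_› hs ht, ?_⟩
    convert O.add_mem (O.mul_mem t.2 hsx) (O.mul_mem s.2 hty) using 1
    push_cast
    ring
  one_mem' := ⟨1, Ideal.IsPrime.one_notMem ‹_›, by simp⟩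
  zero_mem' := ⟨1, Ideal.IsPrime.one_notMem ‹_›, by simp⟩
  neg_mem' := by
    rintro x ⟨s, hs, hsx⟩
    exact ⟨s, hs, by simpa using hsx⟩

variable {O}

theorem mem_denominatorIdeal {x : R} {s : O} : s ∈ denominatorIdeal O x ↔ (s : R) * x ∈ O := by
  simp [denominatorIdeal, Subring.smul_def, Algebra.algebraMap_eq_smul_one]

theorem denominatorIdeal_eq_top_iff {x : R} : denominatorIdeal O x = ⊤ ↔ x ∈ O := by
  simp [Ideal.eq_top_iff_one, mem_denominatorIdeal]

theorem mem_of_mem_conductor_s16 {z : R} (hz : z ∈ O.conductor) : z ∈ O := by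
  simpa using hz 1

section

variable {P : Ideal R} [P.IsPrime]

theorem le_localSubring : O ≤ localSubring O P :=
  fun x hx => ⟨1, Ideal.IsPrime.one_notMem ‹_›, by simpa using hx⟩

theorem mem_localSubring_of_mul_mem {s : O} {x : R} (hs : (s : R) ∉ P)
    (hsx : (s : R) * x ∈ localSubring O P) : x ∈ localSubring O P := by
  obtain ⟨t, ht, htsx⟩ := hsx
  exact ⟨t * s, Ideal.IsPrime.mul_notMem ‹_› ht hs, by push_cast; rwa [mul_assoc]⟩

end

/-- A proper ideal of denominators lies under a maximal ideal of `R`, by integrality. If that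
ideal does not contain the conductor, then elements of the conductor are denominators. -/
theorem mem_of_forall_mem_localSubring [Algebra.IsIntegral O R] {x : R}
    (h : ∀ (P : Ideal R) [P.IsMaximal], O.conductor ≤ P → x ∈ localSubring O P) : x ∈ O := by
  by_contra hx
  obtain ⟨m, hm, hxm⟩ := Ideal.exists_le_maximal _ (mt denominatorIdeal_eq_top_iff.1 hx)
  obtain ⟨P, hP, rfl⟩ := Ideal.exists_ideal_over_maximal_of_isIntegral (S := R) m
    ((RingHom.injective_iff_ker_eq_bot _).1 (FaithfulSMul.algebraMap_injective O R) ▸ bot_le)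
  have denominator_mem {s : O} (hs : (s : R) * x ∈ O) : (s : R) ∈ P :=
    hxm (mem_denominatorIdeal.2 hs)
  by_cases hfP : O.conductor ≤ P
  · obtain ⟨s, hs, hsx⟩ := h P hfP
    exact hs (denominator_mem hsx)
  · obtain ⟨z, hz, hzP⟩ := SetLike.not_le_iff_exists.1 hfP
    exact hzP (denominator_mem (s := ⟨z, mem_of_mem_conductor_s16 hz⟩) (hz x))

theorem mem_of_forall_heightOneSpectrum [Algebra.IsIntegral O R] (hf : O.conductor ≠ ⊥) {x : R}
    (h : ∀ v : HeightOneSpectrum R, O.conductor ≤ v.asIdeal → x ∈ localSubring O v.asIdeal) :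
    x ∈ O :=
  mem_of_forall_mem_localSubring fun P _ hfP =>
    h ⟨P, inferInstance, ne_bot_of_le_ne_bot hf hfP⟩ hfP

theorem mem_of_mul_sub_one_mem_conductor [Algebra.IsIntegral O R] {x y : R} (hx : x ∈ O)
    (hxy : x * y - 1 ∈ O.conductor) : y ∈ O := by
  refine mem_of_forall_mem_localSubring fun P hP hfP => ?_
  have hxP : x ∉ P := fun hxP => hP.isPrime.one_notMem <|
    (Submodule.sub_mem_iff_right _ (P.mul_mem_right y hxP)).1 (hfP hxy)
  have xy_mem : x * y ∈ O := by
    simpa using O.add_mem (mem_of_mem_conductor_s16 hxy) O.one_mem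
  exact mem_localSubring_of_mul_mem (s := ⟨x, hx⟩) hxP (le_localSubring xy_mem)

theorem conductor_ne_bot [IsDomain R] (hne : O ≠ ⊤)
    (hfrac : ∀ r : R, ∃ a b : O, (b : R) ≠ 0 ∧ (b : R) * r = (a : R))
    (hfin : Finite (R ⧸ O.conductor)) : O.conductor ≠ ⊥ := by
  intro hbot
  rw [hbot] at hfin
  have : Finite R := Finite.of_equiv _ (RingEquiv.quotientBot R).toEquiv
  refine hne (eq_top_iff.2 fun r _ => ?_)
  obtain ⟨a, b, hb, hbr⟩ := hfrac r
  obtain ⟨c, hbc⟩ := (Finite.isField_of_domain O).mul_inv_cancel (a := b) (by simpa using hb)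
  have hbc' : (b : R) * c = 1 := by exact_mod_cast hbc
  have hr : r = c * a := by linear_combination (-r) * hbc' + (c : R) * hbr
  exact hr ▸ O.mul_mem c.2 a.2

end LocalSubring

section IdealVal

variable {R : Type*} [CommRing R] [IsDedekindDomain R] (v : HeightOneSpectrum R)

theorem emultiplicity_span_singleton_eq_idealVal {a : R} (ha : a ≠ 0) :
    emultiplicity v.asIdeal (Ideal.span {a}) = idealVal v.asIdeal a := by
  classical
  rw [emultiplicity_eq_count_normalizedFactors v.irreducible (by simpa using ha), normalize_eq,
    idealVal]

theorem le_idealVal_iff {a : R} (ha : a ≠ 0) {n : ℕ} :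
    n ≤ idealVal v.asIdeal a ↔ a ∈ v.asIdeal ^ n := by
  rw [← Ideal.span_singleton_le_iff_mem, ← Ideal.dvd_iff_le, pow_dvd_iff_le_emultiplicity,
    emultiplicity_span_singleton_eq_idealVal v ha, Nat.cast_le]

theorem idealVal_pos_iff {a : R} (ha : a ≠ 0) : 0 < idealVal v.asIdeal a ↔ a ∈ v.asIdeal :=
  (le_idealVal_iff v ha (n := 1)).trans (by rw [pow_one])

theorem idealVal_eq_zero_iff {a : R} (ha : a ≠ 0) :
    idealVal v.asIdeal a = 0 ↔ a ∉ v.asIdeal := by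
  rw [← idealVal_pos_iff v ha, Nat.pos_iff_ne_zero, not_not]

theorem idealVal_mul {a b : R} (ha : a ≠ 0) (hb : b ≠ 0) :
    idealVal v.asIdeal (a * b) = idealVal v.asIdeal a + idealVal v.asIdeal b := by
  have h := emultiplicity_mul (a := Ideal.span {a}) (b := Ideal.span {b}) v.prime
  rw [Ideal.span_singleton_mul_span_singleton,
    emultiplicity_span_singleton_eq_idealVal v (mul_ne_zero ha hb),
    emultiplicity_span_singleton_eq_idealVal v ha,
    emultiplicity_span_singleton_eq_idealVal v hb] at h
  exact_mod_cast h

theorem exists_eq_pow_mul_and_not_le {I : Ideal R} (hI : I ≠ ⊥) :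
    ∃ K : Ideal R, I = v.asIdeal ^ multiplicity v.asIdeal I * K ∧ ¬ K ≤ v.asIdeal := by
  simpa only [Ideal.dvd_iff_le] using
    (FiniteMultiplicity.of_prime_left v.prime hI).exists_eq_pow_mul_and_not_dvd

theorem exists_notMem_dvd_mul {a b : R} (ha : a ≠ 0) (hb : b ≠ 0)
    (hba : idealVal v.asIdeal b ≤ idealVal v.asIdeal a) : ∃ x ∉ v.asIdeal, b ∣ x * a := by
  obtain ⟨K, hK, hKv⟩ := exists_eq_pow_mul_and_not_le v (I := Ideal.span {b}) (by simpa using hb)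
  obtain ⟨x, hxK, hxv⟩ := SetLike.not_le_iff_exists.1 hKv
  rw [multiplicity_eq_of_emultiplicity_eq_some
    (emultiplicity_span_singleton_eq_idealVal v hb)] at hK
  refine ⟨x, hxv, Ideal.mem_span_singleton.1 ?_⟩
  rw [hK, mul_comm x a]
  exact Ideal.mul_mem_mul ((le_idealVal_iff v ha).1 hba) hxK

theorem exists_mul_eq_mul_of_idealVal_eq {a b : R} (ha : a ≠ 0) (hb : b ≠ 0)
    (hab : idealVal v.asIdeal a = idealVal v.asIdeal b) :
    ∃ x ∉ v.asIdeal, ∃ y ∉ v.asIdeal, x * a = y * b := by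
  obtain ⟨x, hx, y, hxy⟩ := exists_notMem_dvd_mul v ha hb hab.ge
  have hx0 : x ≠ 0 := by rintro rfl; exact hx v.asIdeal.zero_mem
  have hy0 : y ≠ 0 := right_ne_zero_of_mul (hxy ▸ mul_ne_zero hx0 ha)
  have hval := congrArg (idealVal v.asIdeal) hxy
  rw [idealVal_mul v hx0 ha, idealVal_mul v hb hy0, (idealVal_eq_zero_iff v hx0).2 hx] at hval
  exact ⟨x, hx, y, (idealVal_eq_zero_iff v hy0).1 (by omega), by rw [hxy, mul_comm]⟩

theorem exists_forall_sub_mem_pow_of_le {I : Ideal R} (hI : I ≠ ⊥) (e : HeightOneSpectrum R → ℕ)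
    (x : HeightOneSpectrum R → R) :
    ∃ r : R, ∀ v : HeightOneSpectrum R, I ≤ v.asIdeal → r - x v ∈ v.asIdeal ^ e v := by
  have hfin := Ideal.finite_factors hI
  obtain ⟨r, hr⟩ := IsDedekindDomain.exists_forall_sub_mem_ideal (s := hfin.toFinset)
    HeightOneSpectrum.asIdeal e (fun v _ => v.prime)
    (fun _ _ _ _ h => mt (HeightOneSpectrum.ext (R := R)) h) (fun v => x v)
  exact ⟨r, fun v hv => hr v (by simpa [Ideal.dvd_iff_le] using hv)⟩

end IdealVal

section InclusionTransfer

variable {R : Type*} [CommRing R] [IsDedekindDomain R] {O : Subring R}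
  (v : HeightOneSpectrum R)

/-- The condition `v_P(u) = 1` for all atoms `u` of the localization of `O` at `P ∩ O`, tested on
representatives `u ∈ O`. -/
def LocalAtomsHaveValOne (O : Subring R) (P : Ideal R) : Prop :=
  ∀ (hq : (Ideal.comap (Subring.subtype O) P).IsPrime) (a : O),
    IsLocalAtom O P hq a → idealVal P (a : R) = 1

theorem exists_mul_eq_mul_of_not_isLocalAtom {a : O} (ha : (a : R) ≠ 0) (hav : (a : R) ∈ v.asIdeal)
    (hq : (Ideal.comap O.subtype v.asIdeal).IsPrime) (h : ¬ IsLocalAtom O v.asIdeal hq a) :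
    ∃ b c s : O, (s : R) ∉ v.asIdeal ∧ 0 < idealVal v.asIdeal (b : R) ∧
      0 < idealVal v.asIdeal (c : R) ∧
      idealVal v.asIdeal (b : R) + idealVal v.asIdeal (c : R) = idealVal v.asIdeal (a : R) ∧
      b * c = s * a := by
  obtain ⟨b, hb, c, hc, s, hs, hbc⟩ := exists_mul_eq_mul_of_not_irreducible_algebraMap
    (Ideal.comap O.subtype v.asIdeal) (Ideal.mem_comap.2 hav) h
  rw [Ideal.mem_comap, Subring.subtype_apply] at hb hc hs
  have hs0 : (s : R) ≠ 0 := fun h => hs (h ▸ v.asIdeal.zero_mem)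
  have hbcR : (b : R) * c = s * a := by exact_mod_cast hbc
  have hbc0 : (b : R) * c ≠ 0 := hbcR ▸ mul_ne_zero hs0 ha
  have hb0 := left_ne_zero_of_mul hbc0
  have hc0 := right_ne_zero_of_mul hbc0
  refine ⟨b, c, s, hs, (idealVal_pos_iff v hb0).2 hb, (idealVal_pos_iff v hc0).2 hc, ?_, hbc⟩
  rw [← idealVal_mul v hb0 hc0, hbcR, idealVal_mul v hs0 ha, (idealVal_eq_zero_iff v hs0).2 hs,
    zero_add]

theorem LocalAtomsHaveValOne.exists_mul_eq_mul (hval : LocalAtomsHaveValOne O v.asIdeal) {a : O}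
    (ha : (a : R) ≠ 0) {i : ℕ} (hi : i ≤ idealVal v.asIdeal (a : R)) :
    ∃ u w s : O, (s : R) ∉ v.asIdeal ∧ idealVal v.asIdeal (u : R) = i ∧ u * w = s * a := by
  have one_notMem := v.isPrime.one_notMem
  have ne_zero_of_notMem {s : O} (hs : (s : R) ∉ v.asIdeal) : (s : R) ≠ 0 :=
    fun h => hs (h ▸ v.asIdeal.zero_mem)
  induction hn : idealVal v.asIdeal (a : R) using Nat.strong_induction_on generalizing a i with
  | _ n ih =>
  by_cases hi0 : i = 0
  · exact ⟨1, a, 1, one_notMem, hi0 ▸ (idealVal_eq_zero_iff v one_ne_zero).2 one_notMem, rfl⟩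
  have hq : (Ideal.comap O.subtype v.asIdeal).IsPrime := inferInstance
  by_cases hatom : IsLocalAtom O v.asIdeal hq a
  · exact ⟨a, 1, 1, one_notMem, by have := hval hq a hatom; omega, mul_comm a 1⟩
  obtain ⟨b, c, s, hs, hb, hc, hadd, hbc⟩ := exists_mul_eq_mul_of_not_isLocalAtom v ha
    ((idealVal_pos_iff v ha).1 (by omega)) hq hatom
  have hbcR : (b : R) * c = s * a := by exact_mod_cast hbc
  have hbc0 : (b : R) * c ≠ 0 := hbcR ▸ mul_ne_zero (ne_zero_of_notMem hs) ha
  have hb0 := left_ne_zero_of_mul hbc0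
  have hc0 := right_ne_zero_of_mul hbc0
  obtain hib | hbi := le_total i (idealVal v.asIdeal (b : R))
  · obtain ⟨u, w, t, ht, hu, huw⟩ := ih _ (by omega) hb0 hib rfl
    exact ⟨u, w * c, t * s, v.isPrime.mul_notMem ht hs, hu,
      by linear_combination c * huw + t * hbc⟩
  · obtain ⟨u, w, t, ht, hu, huw⟩ :=
      ih _ (by omega) hc0 (i := i - idealVal v.asIdeal (b : R)) (by omega) rfl
    have hu0 : (u : R) ≠ 0 := by
      have huwR : (u : R) * w = t * c := by exact_mod_cast huw
      exact left_ne_zero_of_mul (huwR ▸ mul_ne_zero (ne_zero_of_notMem ht) hc0)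
    refine ⟨b * u, w, t * s, v.isPrime.mul_notMem ht hs, ?_,
      by linear_combination b * huw + t * hbc⟩
    rw [Subring.coe_mul, idealVal_mul v hb0 hu0, hu]
    omega

theorem exists_forall_mem_pow_mem_localSubring (hf : O.conductor ≠ ⊥)
    (hOR : ∀ r : R, ∃ ε : Rˣ, (ε : R) * r ∈ O) :
    ∃ n : ℕ, ∀ z ∈ v.asIdeal ^ n, z ∈ localSubring O v.asIdeal := by
  obtain ⟨K, hK, hKv⟩ := exists_eq_pow_mul_and_not_le v hf
  obtain ⟨k, hkK, hkv⟩ := SetLike.not_le_iff_exists.1 hKv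
  obtain ⟨ε, hε⟩ := hOR k
  refine ⟨multiplicity v.asIdeal O.conductor, fun z hz => ⟨⟨ε * k, hε⟩, ?_, ?_⟩⟩
  · rwa [Ideal.unit_mul_mem_iff_mem _ ε.isUnit]
  · have hzk : z * k ∈ O.conductor := hK ▸ Ideal.mul_mem_mul hz hkK
    convert hzk ε using 1
    ring

theorem LocalAtomsHaveValOne.exists_local_scaling (hval : LocalAtomsHaveValOne O v.asIdeal)
    {n : ℕ} (hn : ∀ z ∈ v.asIdeal ^ n, z ∈ localSubring O v.asIdeal) {a : O} {b c : R}
    (ha : (a : R) ≠ 0) (habc : (a : R) = b * c) :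
    ∃ r r' : R, r * r' - 1 ∈ v.asIdeal ^ n ∧
      r * b ∈ localSubring O v.asIdeal ∧ r' * c ∈ localSubring O v.asIdeal := by
  have hb0 : b ≠ 0 := left_ne_zero_of_mul (habc ▸ ha)
  have hc0 : c ≠ 0 := right_ne_zero_of_mul (habc ▸ ha)
  have val_b_le : idealVal v.asIdeal b ≤ idealVal v.asIdeal (a : R) := by
    rw [habc, idealVal_mul v hb0 hc0]
    exact Nat.le_add_right _ _
  obtain ⟨u, w, s, hs, hu, huw⟩ := hval.exists_mul_eq_mul v ha val_b_le
  have huwR : (u : R) * w = s * a := by exact_mod_cast huw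
  have hs0 : (s : R) ≠ 0 := fun h => hs (h ▸ v.asIdeal.zero_mem)
  have hu0 : (u : R) ≠ 0 := left_ne_zero_of_mul (huwR ▸ mul_ne_zero hs0 ha)
  obtain ⟨x, hx, y, hy, hxy⟩ := exists_mul_eq_mul_of_idealVal_eq v hu0 hb0 hu
  obtain ⟨x', i, hi, hxi⟩ := Ideal.IsMaximal.exists_inv_pow v.asIdeal hx n
  obtain ⟨y', j, hj, hyj⟩ := Ideal.IsMaximal.exists_inv_pow v.asIdeal hy n
  have hsc : (s : R) * (x * c) = y * w := by
    refine mul_left_cancel₀ hb0 ?_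
    linear_combination (-x) * huwR - x * s * habc + (w : R) * hxy
  -- The scaling is `r ≡ y / x` modulo `v ^ n`, because `(y / x) * b = u` and `(x / y) * c = w / s`.
  refine ⟨x' * y, y' * x, ?_, ?_, mem_localSubring_of_mul_mem hs ?_⟩
  · have : x' * y * (y' * x) - 1 = -(x' * x * j + i) := by
      linear_combination x' * x * hyj + hxi
    rw [this]
    exact neg_mem (add_mem (Ideal.mul_mem_left _ _ hj) hi)
  · have : x' * y * b = u - i * u := by linear_combination (-x') * hxy + (u : R) * hxi
    rw [this]
    exact sub_mem (le_localSubring u.2) (hn _ (Ideal.mul_mem_right _ _ hi))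
  · have : (s : R) * (y' * x * c) = w - j * w := by
      linear_combination y' * hsc + (w : R) * hyj
    rw [this]
    exact sub_mem (le_localSubring w.2) (hn _ (Ideal.mul_mem_right _ _ hj))

variable [Algebra.IsIntegral O R]

theorem exists_scaling_mod_conductor (hf : O.conductor ≠ ⊥)
    (hOR : ∀ r : R, ∃ ε : Rˣ, (ε : R) * r ∈ O)
    (hval : ∀ v : HeightOneSpectrum R, O.conductor ≤ v.asIdeal →
      LocalAtomsHaveValOne O v.asIdeal)
    {a : O} {b c : R} (ha : (a : R) ≠ 0) (habc : (a : R) = b * c) :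
    ∃ r r' : R, r * r' - 1 ∈ O.conductor ∧ r * b ∈ O ∧ r' * c ∈ O := by
  choose n hn using fun v : HeightOneSpectrum R =>
    exists_forall_mem_pow_mem_localSubring v hf hOR
  choose! x x' hxx' hxb hxc using fun v hv => (hval v hv).exists_local_scaling v (hn v) ha habc
  obtain ⟨r, hr⟩ := exists_forall_sub_mem_pow_of_le hf n x
  obtain ⟨r', hr'⟩ := exists_forall_sub_mem_pow_of_le hf n x'
  refine ⟨r, r', fun z => ?_, ?_, ?_⟩ <;> refine mem_of_forall_heightOneSpectrum hf fun v hv => ?_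
  · refine hn v _ (Ideal.mul_mem_right _ _ ?_)
    convert add_mem (add_mem (Ideal.mul_mem_right r' _ (hr v hv))
      (Ideal.mul_mem_left _ (x v) (hr' v hv))) (hxx' v hv) using 1
    ring
  · convert add_mem (hn v _ (Ideal.mul_mem_right b _ (hr v hv))) (hxb v hv) using 1
    ring
  · convert add_mem (hn v _ (Ideal.mul_mem_right c _ (hr' v hv))) (hxc v hv) using 1
    ring

theorem exists_unit_scaling (hf : O.conductor ≠ ⊥) (hOR : ∀ r : R, ∃ ε : Rˣ, (ε : R) * r ∈ O)
    (hval : ∀ v : HeightOneSpectrum R, O.conductor ≤ v.asIdeal →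
      LocalAtomsHaveValOne O v.asIdeal)
    {a : O} {b c : R} (habc : (a : R) = b * c) :
    ∃ ε : Rˣ, (ε : R) * b ∈ O ∧ ((ε⁻¹ : Rˣ) : R) * c ∈ O := by
  by_cases ha : (a : R) = 0
  · obtain rfl | rfl := mul_eq_zero.1 (habc.symm.trans ha)
    · obtain ⟨ε, hε⟩ := hOR c
      exact ⟨ε⁻¹, by simp, by simpa using hε⟩
    · obtain ⟨ε, hε⟩ := hOR b
      exact ⟨ε, hε, by simp⟩
  obtain ⟨r, r', hrr', hrb, hrc⟩ := exists_scaling_mod_conductor hf hOR hval ha habc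
  obtain ⟨η, hηr⟩ := hOR r
  have hη : ((η⁻¹ : Rˣ) : R) * η = 1 := η.inv_mul
  have hηr' : ((η⁻¹ : Rˣ) : R) * r' ∈ O := by
    refine mem_of_mul_sub_one_mem_conductor hηr ?_
    convert hrr' using 1
    linear_combination r * r' * hη
  refine ⟨η⁻¹, ?_, ?_⟩
  · convert O.sub_mem (O.mul_mem hηr' hrb) (hrr' (((η⁻¹ : Rˣ) : R) * b)) using 1
    ring
  · rw [inv_inv]
    convert O.sub_mem (O.mul_mem hηr hrc) (hrr' ((η : R) * c)) using 1
    ring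

theorem inclusionIsTransferHom_of_localAtomsHaveValOne (hf : O.conductor ≠ ⊥)
    (hOR : ∀ r : R, ∃ ε : Rˣ, (ε : R) * r ∈ O)
    (hval : ∀ v : HeightOneSpectrum R, O.conductor ≤ v.asIdeal →
      LocalAtomsHaveValOne O v.asIdeal) :
    InclusionIsTransferHom O := by
  refine ⟨fun r _ => ?_, fun a ha => isUnit_of_map_unit (algebraMap O R) a ha,
    fun a b c habc => ?_⟩
  · obtain ⟨ε, hε⟩ := hOR r
    exact ⟨⟨_, hε⟩, ε⁻¹, by simp [mul_comm]⟩
  · obtain ⟨ε, hεb, hεc⟩ := exists_unit_scaling hf hOR hval habc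
    refine ⟨⟨_, hεb⟩, ⟨_, hεc⟩, Subtype.ext ?_, ?_, ?_⟩
    · push_cast
      rw [mul_mul_mul_comm, ε.mul_inv, one_mul, habc]
    · exact associated_unit_mul_left b _ ε.isUnit
    · exact associated_unit_mul_left c _ ε⁻¹.isUnit

end InclusionTransfer

section TransferHom

theorem IsTransferHom.comp {H B C : Type*} [CommMonoid H] [CommMonoid B] [CommMonoid C]
    {θ : B →* C} {φ : H →* B} (hθ : IsTransferHom θ) (hφ : IsTransferHom φ) :
    IsTransferHom (θ.comp φ) := by
  obtain ⟨hθ₁, hθ₂, hθ₃⟩ := hθ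
  obtain ⟨hφ₁, hφ₂, hφ₃⟩ := hφ
  refine ⟨fun c => ?_, fun u hu => hφ₂ u (hθ₂ _ hu), fun u b c hbc => ?_⟩
  · obtain ⟨b, ε, rfl⟩ := hθ₁ c
    obtain ⟨u, δ, rfl⟩ := hφ₁ b
    exact ⟨u, Units.map θ δ * ε, by simp [mul_assoc]⟩
  · obtain ⟨x, y, hxy, hxb, hyc⟩ := hθ₃ (φ u) b c hbc
    obtain ⟨v, w, huvw, hvx, hwy⟩ := hφ₃ u x y hxy
    exact ⟨v, w, huvw, (hvx.map θ).trans hxb, (hwy.map θ).trans hyc⟩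

variable {R : Type*} [CommRing R] [IsDomain R]

/-- The inclusion `O^∙ ↪ R^∙` as a homomorphism of monoids. -/
def nonZeroDivisorsInclusion (O : Subring R) : O⁰ →* R⁰ :=
  ((O.subtype : O →* R).comp O⁰.subtype).codRestrict R⁰
    fun a => map_mem_nonZeroDivisors O.subtype O.subtype_injective a.2

theorem InclusionIsTransferHom.isTransferHom {O : Subring R} (hO : InclusionIsTransferHom O) :
    IsTransferHom (nonZeroDivisorsInclusion O) := by
  obtain ⟨h₁, h₂, h₃⟩ := hO
  have mem_iff {a : O} : a ∈ O⁰ ↔ (a : R) ≠ 0 := by simp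
  refine ⟨fun b => ?_, fun u hu => ?_, fun u b c hbc => ?_⟩
  · obtain ⟨a, ε, hb⟩ := h₁ b (nonZeroDivisors.ne_zero b.2)
    have ha : a ∈ O⁰ := mem_iff.2 (left_ne_zero_of_mul (hb ▸ nonZeroDivisors.ne_zero b.2))
    exact ⟨⟨a, ha⟩, unitsNonZeroDivisorsEquiv.symm ε, Subtype.ext hb⟩
  · obtain ⟨ε, hε⟩ := h₂ u (hu.map R⁰.subtype)
    exact ⟨unitsNonZeroDivisorsEquiv.symm ε, Subtype.ext hε⟩
  · obtain ⟨x, y, hxy, hxb, hyc⟩ := h₃ u b c (congrArg Subtype.val hbc)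
    have hxy0 : x * y ∈ O⁰ := hxy ▸ u.2
    obtain ⟨hx, hy⟩ := mul_mem_nonZeroDivisors.1 hxy0
    exact ⟨⟨x, hx⟩, ⟨y, hy⟩, Subtype.ext hxy, nonZeroDivisors.associated_coe.1 hxb,
      nonZeroDivisors.associated_coe.1 hyc⟩

end TransferHom

theorem exists_add_of_multiset_map_eq_add {α β : Type*} {f : α → β} {s : Multiset α}
    {t₁ t₂ : Multiset β} (h : s.map f = t₁ + t₂) :
    ∃ s₁ s₂, s = s₁ + s₂ ∧ s₁.map f = t₁ ∧ s₂.map f = t₂ := by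
  rw [← Multiset.rel_eq, Multiset.rel_map_left, Multiset.rel_add_right] at h
  obtain ⟨s₁, s₂, h₁, h₂, rfl⟩ := h
  rw [← Multiset.rel_map_left, Multiset.rel_eq] at h₁ h₂
  exact ⟨s₁, s₂, rfl, h₁, h₂⟩

section BlockHom

variable {R : Type*} [CommRing R] [IsDedekindDomain R]

open Classical in
/-- The class of an ideal in the class group, with the junk value `1` at the zero ideal. Being
defined on all ideals, it can be mapped over `normalizedFactors`. -/
noncomputable def idealClass (I : Ideal R) : ClassGroup R :=
  if hI : I ∈ (Ideal R)⁰ then ClassGroup.mk0 ⟨I, hI⟩ else 1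

theorem idealClass_eq_mk0 {I : Ideal R} (hI : I ∈ (Ideal R)⁰) :
    idealClass I = ClassGroup.mk0 ⟨I, hI⟩ :=
  dif_pos hI

theorem idealClass_eq_one_iff {I : Ideal R} (hI : I ≠ ⊥) :
    idealClass I = 1 ↔ I.IsPrincipal := by
  rw [idealClass_eq_mk0 (mem_nonZeroDivisors_of_ne_zero hI), ClassGroup.mk0_eq_one_iff]

theorem idealClass_multiset_prod {m : Multiset (Ideal R)} (hm : ∀ I ∈ m, I ∈ (Ideal R)⁰) :
    idealClass m.prod = (m.map idealClass).prod := by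
  lift m to Multiset (Ideal R)⁰ using hm
  have hprod : (m.map ((↑) : (Ideal R)⁰ → Ideal R)).prod = (m.prod : (Ideal R)⁰) :=
    (map_multiset_prod (Ideal R)⁰.subtype m).symm
  rw [hprod, idealClass_eq_mk0 m.prod.2, Subtype.coe_eta, map_multiset_prod, Multiset.map_map]
  exact congrArg _ (Multiset.map_congr rfl fun I _ => (idealClass_eq_mk0 I.2).symm)

/-- The sequence of classes of the prime ideals in the factorization of `a`, with multiplicity. -/
noncomputable def primeClasses (a : R) : Multiset (ClassGroup R) :=
  (normalizedFactors (Ideal.span {a})).map idealClass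

theorem primeClasses_one : primeClasses (1 : R) = 0 := by
  rw [primeClasses, Ideal.span_singleton_one, ← Ideal.one_eq_top, normalizedFactors_one,
    Multiset.map_zero]

theorem primeClasses_mul {a b : R} (ha : a ≠ 0) (hb : b ≠ 0) :
    primeClasses (a * b) = primeClasses a + primeClasses b := by
  rw [primeClasses, ← Ideal.span_singleton_mul_span_singleton,
    normalizedFactors_mul (by simpa using ha) (by simpa using hb), Multiset.map_add]
  rfl

theorem prod_primeClasses {a : R} (ha : a ≠ 0) : (primeClasses a).prod = 1 := by
  have hspan : Ideal.span {a} ≠ ⊥ := by simpa using ha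
  rw [primeClasses, ← idealClass_multiset_prod fun P hP =>
      mem_nonZeroDivisors_of_ne_zero (prime_of_normalized_factor P hP).ne_zero,
    Ideal.prod_normalizedFactors_eq_self hspan, idealClass_eq_one_iff hspan]
  exact ⟨a, rfl⟩

theorem isUnit_of_primeClasses_eq_zero {a : R} (ha : a ≠ 0) (h : primeClasses a = 0) :
    IsUnit a := by
  rw [primeClasses, Multiset.map_eq_zero] at h
  rw [← Ideal.span_singleton_eq_top,
    ← Ideal.prod_normalizedFactors_eq_self (I := Ideal.span {a}) (by simpa using ha), h,
    Multiset.prod_zero, Ideal.one_eq_top]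

theorem exists_span_eq_multiset_prod {m : Multiset (Ideal R)} (hm : ∀ P ∈ m, Prime P)
    (h : (m.map idealClass).prod = 1) :
    ∃ a : R⁰, Ideal.span {(a : R)} = m.prod ∧ primeClasses (a : R) = m.map idealClass := by
  have hprod : m.prod ≠ ⊥ := m.prod_ne_zero_of_prime hm
  rw [← idealClass_multiset_prod fun P hP => mem_nonZeroDivisors_of_ne_zero (hm P hP).ne_zero,
    idealClass_eq_one_iff hprod] at h
  obtain ⟨a, ha⟩ := h
  have hspan : Ideal.span {a} = m.prod := ha.symm
  have ha0 : a ≠ 0 := by rintro rfl; exact hprod (by rw [← hspan]; simp)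
  exact ⟨⟨a, mem_nonZeroDivisors_of_ne_zero ha0⟩, hspan, by
    rw [primeClasses, hspan, normalizedFactors_prod_of_prime hm]⟩

variable (R) in
/-- The homomorphism from `R^∙` to the zero-sum sequences over `Cl(R)` that sends an element to the
sequence of classes of its prime divisors. -/
noncomputable def blockHom : R⁰ →* BlockMonoid (ClassGroup R) where
  toFun a := ⟨.ofAdd (primeClasses (a : R)), prod_primeClasses (nonZeroDivisors.ne_zero a.2)⟩
  map_one' := Subtype.ext (congrArg Multiplicative.ofAdd primeClasses_one)
  map_mul' a b := Subtype.ext <| congrArg Multiplicative.ofAdd <|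
    primeClasses_mul (nonZeroDivisors.ne_zero a.2) (nonZeroDivisors.ne_zero b.2)

theorem blockHom_eq_iff {a : R⁰} {b : BlockMonoid (ClassGroup R)} :
    blockHom R a = b ↔ primeClasses (a : R) = b.1.toAdd :=
  Subtype.ext_iff

theorem blockHom_isTransferHom
    (hcls : ∀ c : ClassGroup R, ∃ (P : Ideal R) (hP : P ∈ (Ideal R)⁰),
      P.IsPrime ∧ ClassGroup.mk0 ⟨P, hP⟩ = c) :
    IsTransferHom (blockHom R) := by
  refine ⟨fun b => ?_, fun a ha => ?_, fun a b c habc => ?_⟩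
  · choose P hP hPprime hPclass using hcls
    have hmap : (b.1.toAdd.map P).map idealClass = b.1.toAdd := by
      simp [Multiset.map_map, idealClass_eq_mk0 (hP _), hPclass]
    have hprime : ∀ Q ∈ b.1.toAdd.map P, Prime Q := by
      simp only [Multiset.mem_map, forall_exists_index, and_imp, forall_apply_eq_imp_iff₂]
      exact fun c _ => Ideal.prime_of_isPrime (nonZeroDivisors.ne_zero (hP c)) (hPprime c)
    obtain ⟨a, -, ha⟩ := exists_span_eq_multiset_prod hprime (hmap.symm ▸ b.2)
    exact ⟨a, 1, by rw [Units.val_one, mul_one, blockHom_eq_iff.2 (ha.trans hmap)]⟩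
  · have hone : ((blockHom R a : BlockMonoid _) : Multiplicative (Multiset (ClassGroup R))) = 1 :=
      isUnit_iff_eq_one.1 (ha.map (BlockMonoid (ClassGroup R)).subtype)
    obtain ⟨ε, hε⟩ := isUnit_of_primeClasses_eq_zero (nonZeroDivisors.ne_zero a.2) hone
    exact ⟨unitsNonZeroDivisorsEquiv.symm ε, Subtype.ext hε⟩
  · obtain ⟨s, t, hst, hs, ht⟩ := exists_add_of_multiset_map_eq_add (blockHom_eq_iff.1 habc)
    have hprime : ∀ P ∈ s + t, Prime P := hst ▸ fun P hP => prime_of_normalized_factor P hP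
    obtain ⟨x, hx, hxs⟩ := exists_span_eq_multiset_prod
      (fun P hP => hprime P (Multiset.mem_add.2 (.inl hP))) (hs ▸ b.2)
    obtain ⟨y, hy, hyt⟩ := exists_span_eq_multiset_prod
      (fun P hP => hprime P (Multiset.mem_add.2 (.inr hP))) (ht ▸ c.2)
    have hxy : Associated (x * y) a := by
      rw [← nonZeroDivisors.associated_coe, ← Ideal.span_singleton_eq_span_singleton,
        Submonoid.coe_mul, ← Ideal.span_singleton_mul_span_singleton, hx, hy, ← Multiset.prod_add,
        ← hst, Ideal.prod_normalizedFactors_eq_self (by simp)]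
    obtain ⟨ε, hε⟩ := hxy
    refine ⟨x, y * ε, by rw [← mul_assoc, hε], .of_eq (blockHom_eq_iff.2 (hxs.trans hs)), ?_⟩
    rw [← blockHom_eq_iff.2 (hyt.trans ht)]
    exact (associated_mul_unit_left y _ ε.isUnit).map (blockHom R)

end BlockHom

theorem characterization_gives_transfer_hom_general
    {R : Type*} [CommRing R] [IsDedekindDomain R]
    (O : Subring R) [Algebra.IsIntegral O R] (hf : O.conductor ≠ ⊥)
    (hcls : ∀ c : ClassGroup R, ∃ (P : Ideal R) (hP : P ∈ (Ideal R)⁰),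
      P.IsPrime ∧ ClassGroup.mk0 ⟨P, hP⟩ = c)
    (hOR : ∀ r : R, ∃ ε : Rˣ, (ε : R) * r ∈ O)
    (hval : ∀ v : HeightOneSpectrum R, O.conductor ≤ v.asIdeal →
      LocalAtomsHaveValOne O v.asIdeal) :
    InclusionIsTransferHom O ∧
    ∃ θ : O⁰ →* BlockMonoid (ClassGroup R), IsTransferHom θ := by
  have hO := inclusionIsTransferHom_of_localAtomsHaveValOne hf hOR hval
  exact ⟨hO, _, (blockHom_isTransferHom hcls).comp hO.isTransferHom⟩

theorem characterization_gives_transfer_hom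
    {R : Type*} [CommRing R] [IsDomain R] [IsDedekindDomain R]
    (O : Subring R) (hne : O ≠ ⊤) (hfg : Module.Finite ↥O R)
    (hfrac : ∀ r : R, ∃ a b : ↥O, (b : R) ≠ 0 ∧ (b : R) * r = (a : R))
    (htor : ∀ c : ClassGroup R, ∃ n : ℕ, 0 < n ∧ c ^ n = 1)
    (hfin : Finite (R ⧸ O.conductor))
    (hcls : ∀ c : ClassGroup R, ∃ (P : Ideal R) (hP : P ∈ (Ideal R)⁰),
      P.IsPrime ∧ ¬ O.conductor ≤ P ∧ ClassGroup.mk0 ⟨P, hP⟩ = c)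
    (hcard : Nat.card (ClassGroup R) ≠ 2)
    (hOR : ∀ r : R, ∃ ε : Rˣ, (ε : R) * r ∈ O)
    (hval : ∀ (P : Ideal R), P.IsPrime → P ≠ ⊥ →
      ∀ (hq : (Ideal.comap (Subring.subtype O) P).IsPrime) (a : ↥O),
        IsLocalAtom O P hq a → idealVal P (a : R) = 1) :
    InclusionIsTransferHom O ∧
    ∃ θ : ↥(nonZeroDivisors ↥O) →* ↥(BlockMonoid (ClassGroup R)), IsTransferHom θ := by
  exact characterization_gives_transfer_hom_general O (conductor_ne_bot hne hfrac hfin)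
    (fun c => (hcls c).imp fun _ ⟨hP, hprime, _, hclass⟩ => ⟨hP, hprime, hclass⟩) hOR
    fun v _ => hval v.asIdeal v.isPrime v.ne_bot
end
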